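/- If the commutative ℤ-graded ring A is Noetherian, then for every w ∈ ℤ the small pre-additive category F_{≥w} is Noetherian, i.e. every submodule of a finitely generated right F_{≥w}-module is finitely generated, and likewise for left F_{≥w}-modules. -/

import Mathlib

/-!
# Statement 7

If the commutative ℤ-graded ring `A` is Noetherian, then for every `w ∈ ℤ` the small
pre-additive category `F_{≥w}` (objects the integers `≥ w`, Hom-groups
`F(i,j) = A_{i-j}`) is Noetherian: every submodule of a finitely generated right
`F_{≥w}`-module is finitely generated, and likewise for left `F_{≥w}`-modules.
-/

universe u

variable {A : Type u} [CommRing A]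

/-- Index set of the full subcategory `F_{≥w} ⊆ F`: the integers `≥ w`. -/
abbrev GeIdx (w : ℤ) := {i : ℤ // w ≤ i}

/-- A right module over the small pre-additive category `F_{≥w}` attached to a commutative
ℤ-graded ring `A` (an additive functor `F_{≥w}^op → Ab`): abelian groups `M i` for
`i ≥ w` together with additive action maps `𝒜 (i-j) → (M j →+ M i)`, unital and
associative for the multiplication of `A`. -/
structure FgeModule (𝒜 : ℤ → AddSubgroup A) [GradedRing 𝒜] (w : ℤ) where
  M : GeIdx w → Type u
  [addCommGroup : ∀ i, AddCommGroup (M i)]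
  act : ∀ i j : GeIdx w, 𝒜 (i.1 - j.1) → (M j →+ M i)
  act_add : ∀ (i j : GeIdx w) (f g : 𝒜 (i.1 - j.1)) (m : M j),
    act i j (f + g) m = act i j f m + act i j g m
  act_one : ∀ (i : GeIdx w) (m : M i),
    act i i ⟨1, by rw [sub_self]; exact SetLike.one_mem_graded 𝒜⟩ m = m
  act_mul : ∀ (i j k : GeIdx w) (f : 𝒜 (i.1 - j.1)) (g : 𝒜 (j.1 - k.1)) (m : M k),
    act i k ⟨(f : A) * (g : A), by
        have h := SetLike.mul_mem_graded f.2 g.2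
        rwa [show i.1 - j.1 + (j.1 - k.1) = i.1 - k.1 by ring] at h⟩ m
      = act i j f (act j k g m)

attribute [instance] FgeModule.addCommGroup

/-- A left module over `F_{≥w}` (an additive functor `F_{≥w} → Ab`): abelian groups `N i`
for `i ≥ w` together with additive action maps `𝒜 (i-j) → (N i →+ N j)`, unital and
associative. -/
structure FgeModuleL (𝒜 : ℤ → AddSubgroup A) [GradedRing 𝒜] (w : ℤ) where
  N : GeIdx w → Type u
  [addCommGroup : ∀ i, AddCommGroup (N i)]
  act : ∀ i j : GeIdx w, 𝒜 (i.1 - j.1) → (N i →+ N j)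
  act_add : ∀ (i j : GeIdx w) (f g : 𝒜 (i.1 - j.1)) (m : N i),
    act i j (f + g) m = act i j f m + act i j g m
  act_one : ∀ (i : GeIdx w) (m : N i),
    act i i ⟨1, by rw [sub_self]; exact SetLike.one_mem_graded 𝒜⟩ m = m
  act_mul : ∀ (i j k : GeIdx w) (f : 𝒜 (i.1 - j.1)) (g : 𝒜 (j.1 - k.1)) (m : N i),
    act i k ⟨(f : A) * (g : A), by
        have h := SetLike.mul_mem_graded f.2 g.2
        rwa [show i.1 - j.1 + (j.1 - k.1) = i.1 - k.1 by ring] at h⟩ m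
      = act j k g (act i j f m)

attribute [instance] FgeModuleL.addCommGroup

variable {𝒜 : ℤ → AddSubgroup A} [GradedRing 𝒜]

/-- A right `F_{≥w}`-module is finitely generated if it admits finitely many homogeneous
generators, i.e. an epimorphism from a finite direct sum of representable modules. -/
def FgeModule.IsFG {w : ℤ} (𝓜 : FgeModule 𝒜 w) : Prop :=
  ∃ (n : ℕ) (deg : Fin n → GeIdx w) (ξ : ∀ s, 𝓜.M (deg s)),
    ∀ (a : GeIdx w) (x : 𝓜.M a),
      ∃ f : ∀ s, 𝒜 (a.1 - (deg s).1), x = ∑ s, 𝓜.act a (deg s) (f s) (ξ s)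

/-- A left `F_{≥w}`-module is finitely generated if it admits finitely many homogeneous
generators. -/
def FgeModuleL.IsFG {w : ℤ} (𝓝 : FgeModuleL 𝒜 w) : Prop :=
  ∃ (n : ℕ) (deg : Fin n → GeIdx w) (ξ : ∀ s, 𝓝.N (deg s)),
    ∀ (a : GeIdx w) (x : 𝓝.N a),
      ∃ f : ∀ s, 𝒜 ((deg s).1 - a.1), x = ∑ s, 𝓝.act (deg s) a (f s) (ξ s)

/-- A submodule of a right `F_{≥w}`-module: subgroups of each weight component, closed
under the action. -/
structure FgeModule.Sub {w : ℤ} (𝓜 : FgeModule 𝒜 w) where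
  carrier : ∀ i, AddSubgroup (𝓜.M i)
  act_mem : ∀ (i j : GeIdx w) (f : 𝒜 (i.1 - j.1)) (m : 𝓜.M j),
    m ∈ carrier j → 𝓜.act i j f m ∈ carrier i

/-- A submodule of a left `F_{≥w}`-module. -/
structure FgeModuleL.Sub {w : ℤ} (𝓝 : FgeModuleL 𝒜 w) where
  carrier : ∀ i, AddSubgroup (𝓝.N i)
  act_mem : ∀ (i j : GeIdx w) (f : 𝒜 (i.1 - j.1)) (m : 𝓝.N i),
    m ∈ carrier i → 𝓝.act i j f m ∈ carrier j

/-- A submodule of a right `F_{≥w}`-module is finitely generated if it has finitely many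
homogeneous generators. -/
def FgeModule.Sub.IsFG {w : ℤ} {𝓜 : FgeModule 𝒜 w} (S : 𝓜.Sub) : Prop :=
  ∃ (n : ℕ) (deg : Fin n → GeIdx w) (ξ : ∀ s, 𝓜.M (deg s)),
    (∀ s, ξ s ∈ S.carrier (deg s)) ∧
      ∀ (a : GeIdx w), ∀ x ∈ S.carrier a,
        ∃ f : ∀ s, 𝒜 (a.1 - (deg s).1), x = ∑ s, 𝓜.act a (deg s) (f s) (ξ s)

/-- A submodule of a left `F_{≥w}`-module is finitely generated if it has finitely many
homogeneous generators. -/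
def FgeModuleL.Sub.IsFG {w : ℤ} {𝓝 : FgeModuleL 𝒜 w} (S : 𝓝.Sub) : Prop :=
  ∃ (n : ℕ) (deg : Fin n → GeIdx w) (ξ : ∀ s, 𝓝.N (deg s)),
    (∀ s, ξ s ∈ S.carrier (deg s)) ∧
      ∀ (a : GeIdx w), ∀ x ∈ S.carrier a,
        ∃ f : ∀ s, 𝒜 ((deg s).1 - a.1), x = ∑ s, 𝓝.act (deg s) a (f s) (ξ s)

/-!
Choose generators `ξ₁, …, ξₙ` of the module. A submodule pulls back to homogeneous vectors in the
free module `Aⁿ`; as `Aⁿ` is Noetherian, the span of these vectors is generated by finitely many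
*of them*. If a homogeneous vector is an `A`-linear combination of homogeneous vectors, it remains
so when each coefficient is replaced by its component of the appropriate degree. Hence the images of
the chosen vectors generate the submodule.

As the argument only uses that degrees add up under composition, right and left modules are the
cases `deg i j = i - j` and `deg i j = j - i` of one argument.
-/

theorem exists_fin_span_range_comp_eq {R M K : Type*} [Semiring R] [AddCommMonoid M] [Module R M]
    [IsNoetherian R M] (v : K → M) :
    ∃ (n : ℕ) (k : Fin n → K),
      Submodule.span R (Set.range (v ∘ k)) = Submodule.span R (Set.range v) := by
  obtain ⟨F, hF, hspan⟩ := (Submodule.fg_span_iff_fg_span_finset_subset (Set.range v)).1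
    (IsNoetherian.noetherian (Submodule.span R (Set.range v)))
  choose k hk using fun t : Fin F.card => hF (F.equivFin.symm t).2
  have hvk : v ∘ k = (↑) ∘ F.equivFin.symm := funext hk
  refine ⟨F.card, k, ?_⟩
  rw [hvk, F.equivFin.symm.surjective.range_comp, Subtype.range_coe]
  exact hspan.symm

/-- Degrees for pairs of objects that add up under composition. Together with a graded ring `R`,
they define the pre-additive category with object set `I` and Hom-groups `Hom(i, j) = R_{deg i j}`:
`F_{≥w}` for `deg i j = i - j`, and its opposite for `deg i j = j - i`. -/
structure DegreeCocycle (I ι : Type*) [AddMonoid ι] where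
  deg : I → I → ι
  deg_self : ∀ i, deg i i = 0
  deg_add_deg : ∀ i j k, deg i j + deg j k = deg i k

namespace DegreeCocycle

variable {I ι R : Type*} [AddMonoid ι] [Ring R]

/-- The Hom-group from `i` to `j` in the category defined by `d`. -/
abbrev Hom (d : DegreeCocycle I ι) (ℛ : ι → AddSubgroup R) (i j : I) : Type _ :=
  ℛ (d.deg i j)

variable [DecidableEq ι] {d : DegreeCocycle I ι} {ℛ : ι → AddSubgroup R} [GradedRing ℛ]

/-- The identity morphism, given by the unit of the ring. -/
def Hom.id (i : I) : d.Hom ℛ i i :=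
  ⟨1, d.deg_self i ▸ SetLike.one_mem_graded ℛ⟩

/-- Composition of morphisms, given by multiplication in the ring in the same order. -/
def Hom.comp {i j k : I} (f : d.Hom ℛ i j) (g : d.Hom ℛ j k) : d.Hom ℛ i k :=
  ⟨f * g, d.deg_add_deg i j k ▸ SetLike.mul_mem_graded f.2 g.2⟩

end DegreeCocycle

/-- A right module over the pre-additive category defined by the degrees `d` and the graded ring
`ℛ`, that is, an additive functor from its opposite to abelian groups. -/
structure DegreeModule {I ι R : Type*} [AddMonoid ι] [DecidableEq ι] [Ring R]
    (d : DegreeCocycle I ι) (ℛ : ι → AddSubgroup R) [GradedRing ℛ] where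
  obj : I → Type*
  [addCommGroup : ∀ i, AddCommGroup (obj i)]
  act : ∀ i j : I, d.Hom ℛ i j →+ obj j →+ obj i
  act_id : ∀ (i : I) (m : obj i), act i i (.id i) m = m
  act_comp : ∀ (i j k : I) (f : d.Hom ℛ i j) (g : d.Hom ℛ j k) (m : obj k),
    act i k (f.comp g) m = act i j f (act j k g m)

attribute [instance] DegreeModule.addCommGroup

namespace DegreeModule

variable {I ι R : Type*} [AddMonoid ι] [DecidableEq ι] [Ring R]
  {d : DegreeCocycle I ι} {ℛ : ι → AddSubgroup R} [GradedRing ℛ]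

/-- The map to `M` from a finite direct sum of representable modules which corresponds to the
family `ξ` under the Yoneda lemma. -/
def lincomb (M : DegreeModule d ℛ) {n : ℕ} {b : Fin n → I} (ξ : ∀ s, M.obj (b s)) {a : I}
    (f : ∀ s, d.Hom ℛ a (b s)) : M.obj a :=
  ∑ s, M.act a (b s) (f s) (ξ s)

theorem lincomb_lincomb (M : DegreeModule d ℛ) {m n : ℕ} {a : I} {b : Fin m → I} {l : Fin n → I}
    (ξ : ∀ s, M.obj (l s)) (g : ∀ t s, d.Hom ℛ (b t) (l s)) (c : ∀ t, d.Hom ℛ a (b t)) :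
    M.lincomb (fun t => M.lincomb ξ (g t)) c =
      M.lincomb ξ fun s => ∑ t, (c t).comp (g t s) := by
  simp only [lincomb, map_sum, AddMonoidHom.finsetSum_apply, M.act_comp]
  exact Finset.sum_comm

/-- Finite generation of a module: some finite direct sum of representable modules maps onto it. -/
def IsFG (M : DegreeModule d ℛ) : Prop :=
  ∃ (n : ℕ) (b : Fin n → I) (ξ : ∀ s, M.obj (b s)),
    ∀ (a : I) (x : M.obj a), ∃ f : ∀ s, d.Hom ℛ a (b s), x = M.lincomb ξ f

/-- A submodule: a family of subgroups stable under the action. -/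
structure Sub (M : DegreeModule d ℛ) where
  carrier : ∀ i, AddSubgroup (M.obj i)
  act_mem : ∀ (i j : I) (f : d.Hom ℛ i j) (m : M.obj j), m ∈ carrier j → M.act i j f m ∈ carrier i

/-- Finite generation of a submodule, by generators taken inside it. -/
def Sub.IsFG {M : DegreeModule d ℛ} (S : M.Sub) : Prop :=
  ∃ (n : ℕ) (b : Fin n → I) (ξ : ∀ s, M.obj (b s)), (∀ s, ξ s ∈ S.carrier (b s)) ∧
    ∀ (a : I), ∀ x ∈ S.carrier a, ∃ f : ∀ s, d.Hom ℛ a (b s), x = M.lincomb ξ f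

end DegreeModule

section Noetherian

variable {I ι R : Type*} [AddRightCancelMonoid ι] [DecidableEq ι] [Ring R]
  {d : DegreeCocycle I ι} {ℛ : ι → AddSubgroup R} [GradedRing ℛ]

theorem DegreeCocycle.exists_eq_sum_comp_of_mem_span {σ τ : Type*} [Fintype τ] {i : I}
    {j : τ → I} {l : σ → I}
    (x : ∀ s, d.Hom ℛ i (l s)) (g : ∀ t s, d.Hom ℛ (j t) (l s))
    (hx : (fun s => (x s : R)) ∈ Submodule.span R (Set.range fun t s => (g t s : R))) :
    ∃ c : ∀ t, d.Hom ℛ i (j t), ∀ s, x s = ∑ t, (c t).comp (g t s) := by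
  obtain ⟨c, hc⟩ := (Submodule.mem_span_range_iff_exists_fun R).1 hx
  refine ⟨fun t => DirectSum.decompose ℛ (c t) (d.deg i (j t)), fun s => Subtype.ext ?_⟩
  have hxs : (x s : R) = ∑ t, c t * g t s := by
    simpa using (congrFun hc s).symm
  calc (x s : R) = DirectSum.decompose ℛ (x s : R) (d.deg i (l s)) :=
        (DirectSum.decompose_of_mem_same ℛ (x s).2).symm
    _ = ∑ t, (DirectSum.decompose ℛ (c t * g t s) (d.deg i (l s)) : R) := by
        rw [hxs, DirectSum.decompose_sum, DFinsupp.finsetSum_apply, AddSubgroup.val_finsetSum]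
    _ = ∑ t, (DirectSum.decompose ℛ (c t) (d.deg i (j t)) * g t s : R) := by
        refine Finset.sum_congr rfl fun t _ => ?_
        rw [← d.deg_add_deg i (j t) (l s)]
        exact DirectSum.coe_decompose_mul_add_of_right_mem ℛ (g t s).2
    _ = (∑ t, Hom.comp ⟨_, SetLike.coe_mem _⟩ (g t s) : d.Hom ℛ i (l s)) := by
        rw [AddSubgroup.val_finsetSum]
        rfl

theorem fge_noetherian_general [IsNoetherianRing R] (M : DegreeModule d ℛ) (hM : M.IsFG)
    (S : M.Sub) : S.IsFG := by
  obtain ⟨n, b, ξ, hξ⟩ := hM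
  let pullback := Σ a : I, {f : ∀ s, d.Hom ℛ a (b s) // M.lincomb ξ f ∈ S.carrier a}
  let toVector : pullback → Fin n → R := fun p s => p.2.1 s
  obtain ⟨m, p, hp⟩ := exists_fin_span_range_comp_eq (R := R) toVector
  refine ⟨m, fun t => (p t).1, fun t => M.lincomb ξ (p t).2.1, fun t => (p t).2.2, ?_⟩
  intro a x hx
  obtain ⟨f, rfl⟩ := hξ a x
  have hf : toVector ⟨a, f, hx⟩ ∈ Submodule.span R (Set.range (toVector ∘ p)) :=
    hp ▸ Submodule.subset_span (Set.mem_range_self _)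
  obtain ⟨c, hc⟩ := DegreeCocycle.exists_eq_sum_comp_of_mem_span f (fun t => (p t).2.1) hf
  exact ⟨c, by rw [M.lincomb_lincomb, ← funext hc]⟩

end Noetherian

/-- The degrees `i - j` of the category `F_{≥w}`. -/
def rightDegree (w : ℤ) : DegreeCocycle (GeIdx w) ℤ where
  deg i j := i.1 - j.1
  deg_self i := sub_self i.1
  deg_add_deg i j k := sub_add_sub_cancel i.1 j.1 k.1

/-- The degrees `j - i` of the opposite of `F_{≥w}`. -/
def leftDegree (w : ℤ) : DegreeCocycle (GeIdx w) ℤ where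
  deg i j := j.1 - i.1
  deg_self i := sub_self i.1
  deg_add_deg i j k := sub_add_sub_cancel' j.1 i.1 k.1

/-- A right `F_{≥w}`-module as a module for the degrees `i - j`. -/
def FgeModule.toDegreeModule {w : ℤ} (𝓜 : FgeModule 𝒜 w) : DegreeModule (rightDegree w) 𝒜 where
  obj := 𝓜.M
  act i j := .mk' (𝓜.act i j) fun f g => AddMonoidHom.ext (𝓜.act_add i j f g)
  act_id := 𝓜.act_one
  act_comp := 𝓜.act_mul

/-- A submodule of a right `F_{≥w}`-module as a submodule for the degrees `i - j`. -/
def FgeModule.Sub.toDegreeModuleSub {w : ℤ} {𝓜 : FgeModule 𝒜 w} (S : 𝓜.Sub) :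
    𝓜.toDegreeModule.Sub where
  carrier := S.carrier
  act_mem := S.act_mem

/-- A left `F_{≥w}`-module as a module for the degrees `j - i`, where `f * g = g * f` turns the
reversed order of composition around. -/
def FgeModuleL.toDegreeModule {w : ℤ} (𝓝 : FgeModuleL 𝒜 w) : DegreeModule (leftDegree w) 𝒜 where
  obj := 𝓝.N
  act i j := .mk' (𝓝.act j i) fun f g => AddMonoidHom.ext (𝓝.act_add j i f g)
  act_id := 𝓝.act_one
  act_comp i j k f g m :=
    (congrArg (𝓝.act k i · m) (Subtype.ext (mul_comm (f : A) g))).trans (𝓝.act_mul k j i g f m)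

/-- A submodule of a left `F_{≥w}`-module as a submodule for the degrees `j - i`. -/
def FgeModuleL.Sub.toDegreeModuleSub {w : ℤ} {𝓝 : FgeModuleL 𝒜 w} (S : 𝓝.Sub) :
    𝓝.toDegreeModule.Sub where
  carrier := S.carrier
  act_mem i j f := S.act_mem j i f

/-- **Statement 7.**  If the commutative ℤ-graded ring `A` is Noetherian, then the
pre-additive category `F_{≥w}` is (left and right) Noetherian: every submodule of a
finitely generated right `F_{≥w}`-module is finitely generated, and every submodule of a
finitely generated left `F_{≥w}`-module is finitely generated. -/
theorem fge_noetherian [IsNoetherianRing A] (w : ℤ) :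
    (∀ 𝓜 : FgeModule 𝒜 w, 𝓜.IsFG → ∀ S : 𝓜.Sub, S.IsFG) ∧
      (∀ 𝓝 : FgeModuleL 𝒜 w, 𝓝.IsFG → ∀ S : 𝓝.Sub, S.IsFG) :=
  ⟨fun 𝓜 h𝓜 S => fge_noetherian_general 𝓜.toDegreeModule h𝓜 S.toDegreeModuleSub,
    fun 𝓝 h𝓝 S => fge_noetherian_general 𝓝.toDegreeModule h𝓝 S.toDegreeModuleSub⟩
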